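/- arXiv:math/0209036 — 3 statements merged into one kernel-verified Lean document; each statement's English description precedes it below -/
import Mathlib

section
/- Let V be a 4-dimensional real vector space, J a complex structure on V, ν a fixed nonzero alternating 4-linear form on V, and G the induced pairing on alternating bilinear forms. Then: (i) the set Λ²_J of J-invariant alternating bilinear forms on V is a 4-dimensional real subspace of the space of alternating bilinear forms; (ii) G restricts to a symmetric bilinear form on Λ²_J; (iii) this restricted form is nondegenerate of Lorentz signature, i.e. there exist a basis (ξ⁰, ξ¹, ξ², ξ³) of Λ²_J and a sign ε ∈ {1, −1} such that G(ξ⁰, ξ⁰) = ε, G(ξᵏ, ξᵏ) = −ε for k = 1, 2, 3, and G(ξᵃ, ξᵇ) = 0 for a ≠ b. -/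
/-!
In a complex basis of `(V, J)` the `J`-invariant alternating bilinear forms are the imaginary parts
of Hermitian forms, i.e. they correspond to Hermitian `2 × 2` matrices, and `α ∧ α` is a fixed
multiple of the determinant. Writing a Hermitian matrix as
`[[c₀ + c₁, c₂ + i c₃], [c₂ - i c₃, c₀ - c₁]]` turns the determinant into the Lorentzian form
`c₀² - c₁² - c₂² - c₃²`. If `b = (e, J e, f, J f)` is the underlying real basis, the forms attached
to the identity and the Pauli matrices are therefore orthogonal for `G`, with squares `2 / ν b` and
`-2 / ν b`. Since `ν b` scales quadratically with `f`, one can arrange that it is `2` or `-2`.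
-/

open Module

universe u

section AlternatingForms

variable {R M N : Type*} [CommRing R] [AddCommGroup M] [Module R M] [AddCommGroup N] [Module R N]

theorem alternating_swap (α : M [⋀^Fin 2]→ₗ[R] N) (x y : M) : α ![y, x] = -α ![x, y] := by
  rw [← α.map_swap ![x, y] (i := 0) (j := 1) (by decide)]
  congr 1
  ext i
  fin_cases i <;> rfl

theorem alternating_neg_left (α : M [⋀^Fin 2]→ₗ[R] N) (x y : M) :
    α ![-x, y] = -α ![x, y] := by
  simpa using α.map_vecCons_smul ![y] (-1) x

theorem alternating_neg_right (α : M [⋀^Fin 2]→ₗ[R] N) (x y : M) :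
    α ![x, -y] = -α ![x, y] := by
  rw [alternating_swap α (-y) x, alternating_neg_left, alternating_swap α x y, neg_neg]

theorem alternating_ext_basis_of_lt {ι : Type*} [LinearOrder ι] (b : Basis ι R M)
    {α β : M [⋀^Fin 2]→ₗ[R] N}
    (h : ∀ i j, i < j → α ![b i, b j] = β ![b i, b j]) : α = β := by
  refine b.ext_alternating fun v hv => ?_
  have hpair : (fun i => b (v i)) = ![b (v 0), b (v 1)] := by
    ext i
    fin_cases i <;> rfl
  rw [hpair]
  rcases lt_or_gt_of_ne (hv.ne zero_ne_one) with hlt | hgt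
  · exact h _ _ hlt
  · rw [alternating_swap α (b (v 1)), alternating_swap β (b (v 1)), h _ _ hgt]

/-- The wedge product of finitely many linear functionals, with the determinant normalization
`(p₁ ∧ ⋯ ∧ pₙ) (x₁, …, xₙ) = det (pⱼ xᵢ)`. -/
noncomputable def wedgeDual {n : ℕ} (p : Fin n → Dual R M) : M [⋀^Fin n]→ₗ[R] R :=
  (Matrix.detRowAlternating (R := R) (n := Fin n)).compLinearMap (LinearMap.pi p)

theorem wedgeDual_pair_apply (p q : Dual R M) (x y : M) :
    wedgeDual ![p, q] ![x, y] = p x * q y - q x * p y :=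
  Matrix.det_fin_two (.of fun i => LinearMap.pi ![p, q] (![x, y] i))

/-- The wedge product of two alternating bilinear forms, evaluated on a fixed quadruple of vectors
by the shuffle sum, as a bilinear form in the two factors. -/
def shuffleWedge (x : Fin 4 → M) : LinearMap.BilinForm R (M [⋀^Fin 2]→ₗ[R] R) :=
  LinearMap.mk₂ R
    (fun α β =>
      α ![x 0, x 1] * β ![x 2, x 3] - α ![x 0, x 2] * β ![x 1, x 3]
        + α ![x 0, x 3] * β ![x 1, x 2] + α ![x 2, x 3] * β ![x 0, x 1]
        - α ![x 1, x 3] * β ![x 0, x 2] + α ![x 1, x 2] * β ![x 0, x 3])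
    (fun _ _ _ => by simp only [AlternatingMap.add_apply]; ring)
    (fun _ _ _ => by simp only [AlternatingMap.smul_apply, smul_eq_mul]; ring)
    (fun _ _ _ => by simp only [AlternatingMap.add_apply]; ring)
    (fun _ _ _ => by simp only [AlternatingMap.smul_apply, smul_eq_mul]; ring)

theorem shuffleWedge_comm (x : Fin 4 → M) (α β : M [⋀^Fin 2]→ₗ[R] R) :
    shuffleWedge x α β = shuffleWedge x β α := by
  simp only [shuffleWedge, LinearMap.mk₂_apply]
  ring

/-- The space of alternating bilinear forms that are invariant under `J`, written `Λ²_J` when `J`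
is a complex structure. -/
def invariantForms (J : M →ₗ[R] M) : Submodule R (M [⋀^Fin 2]→ₗ[R] R) where
  carrier := {α | ∀ x y, α ![J x, J y] = α ![x, y]}
  add_mem' hα hβ x y := by simp only [AlternatingMap.add_apply, hα x y, hβ x y]
  zero_mem' _ _ := rfl
  smul_mem' c α hα x y := by simp only [AlternatingMap.smul_apply, hα x y]

theorem mem_invariantForms_iff_basis {ι : Type*} [LinearOrder ι] (b : Basis ι R M)
    {J : M →ₗ[R] M} {α : M [⋀^Fin 2]→ₗ[R] R} :
    α ∈ invariantForms J ↔ ∀ i j, i < j → α ![J (b i), J (b j)] = α ![b i, b j] := by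
  refine ⟨fun hα i j _ => hα (b i) (b j), fun h => ?_⟩
  have hcomp (x y : M) : α.compLinearMap J ![x, y] = α ![J x, J y] :=
    congrArg α (by ext i; fin_cases i <;> rfl)
  have hJα : α.compLinearMap J = α :=
    alternating_ext_basis_of_lt b fun i j hij => by rw [hcomp, h i j hij]
  intro x y
  rw [← hcomp, hJα]

end AlternatingForms

section AdaptedBasis

/-- A basis `(e, J e, f, J f)` of a module of rank four with an endomorphism `J` of square `-1`:
the real basis underlying the complex basis `(e, f)` when `J` is a complex structure. -/
structure IsAdaptedBasis {R M : Type*} [CommRing R] [AddCommGroup M] [Module R M]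
    (J : M →ₗ[R] M) (b : Basis (Fin 4) R M) : Prop where
  apply_zero : J (b 0) = b 1
  apply_one : J (b 1) = -b 0
  apply_two : J (b 2) = b 3
  apply_three : J (b 3) = -b 2

theorem exists_basis_prod_of_complexStructure {V : Type u} [AddCommGroup V] [Module ℝ V]
    {J : V →ₗ[ℝ] V} (hJ : ∀ v, J (J v) = -v) :
    ∃ (ι : Type u) (b : Basis (ι × Fin 2) ℝ V), ∀ i, J (b (i, 0)) = b (i, 1) := by
  have hJ' : (J : Module.End ℝ V) * J = -1 := LinearMap.ext hJ
  let _ : Module ℂ V := Module.compHom V (Complex.liftAux (A := Module.End ℝ V) J hJ').toRingHom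
  have smul_def (z : ℂ) (v : V) : z • v = z.re • v + z.im • J v := by
    change Complex.liftAux (A := Module.End ℝ V) J hJ' z v = _
    simp
  have : IsScalarTower ℝ ℂ V := ⟨fun r z v => by simp [smul_def, mul_smul]⟩
  refine ⟨_, (Complex.basisOneI.smulTower (Basis.ofVectorSpace ℂ V)).reindex (Equiv.prodComm _ _),
    fun i => ?_⟩
  simp [Basis.smulTower_apply, smul_def]

theorem exists_isAdaptedBasis {V : Type*} [AddCommGroup V] [Module ℝ V]
    (hdim : finrank ℝ V = 4) {J : V →ₗ[ℝ] V} (hJ : ∀ v, J (J v) = -v) :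
    ∃ b : Basis (Fin 4) ℝ V, IsAdaptedBasis J b := by
  obtain ⟨ι, b, hb⟩ := exists_basis_prod_of_complexStructure hJ
  have hcard : Nat.card ι = 2 := by
    have hfinrank := finrank_eq_nat_card_basis b
    rw [hdim, Nat.card_prod, Nat.card_fin] at hfinrank
    lia
  have : Finite ι := Nat.finite_of_card_ne_zero (by lia)
  let e : ι × Fin 2 ≃ Fin 4 :=
    ((Finite.equivFinOfCardEq hcard).prodCongr (Equiv.refl _)).trans finProdFinEquiv
  have hb' (i : ι) : J (b (i, 1)) = -b (i, 0) := by rw [← hb, hJ]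
  refine ⟨b.reindex e, ?_, ?_, ?_, ?_⟩ <;> rw [Basis.reindex_apply, Basis.reindex_apply]
  · exact hb _
  · exact hb' _
  · exact hb _
  · exact hb' _

theorem IsAdaptedBasis.exists_apply_eq_two_or_neg_two {V : Type*} [AddCommGroup V] [Module ℝ V]
    {J : V →ₗ[ℝ] V} {b : Basis (Fin 4) ℝ V} (hb : IsAdaptedBasis J b)
    {ν : V [⋀^Fin 4]→ₗ[ℝ] ℝ} (hν : ν ≠ 0) :
    ∃ b' : Basis (Fin 4) ℝ V, IsAdaptedBasis J b' ∧ (ν b' = 2 ∨ ν b' = -2) := by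
  have hνb : ν b ≠ 0 := (AlternatingMap.map_basis_ne_zero_iff b ν).2 hν
  have hpos : 0 < 2 / |ν b| := by positivity
  let r : ℝˣ := Units.mk0 √(2 / |ν b|) (Real.sqrt_ne_zero'.2 hpos)
  have hr : (r : ℝ) * r = 2 / |ν b| := Real.mul_self_sqrt hpos.le
  let b' := b.unitsSMul ![1, 1, r, r]
  have hb' : IsAdaptedBasis J b' := by
    constructor <;> simp [b', Basis.unitsSMul_apply, Units.smul_def, hb.apply_zero, hb.apply_one,
      hb.apply_two, hb.apply_three]
  have hνb' : ν b' = 2 / |ν b| * ν b := by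
    have hsmul : (b' : Fin 4 → V) = fun i => ((![1, 1, r, r] : Fin 4 → ℝˣ) i : ℝ) • b i :=
      funext fun _ => Basis.unitsSMul_apply ..
    rw [hsmul, AlternatingMap.map_smul_univ]
    simp [Fin.prod_univ_four, hr]
  refine ⟨b', hb', ?_⟩
  rcases abs_choice (ν b) with h | h <;> rw [hνb', h]
  · exact .inl (by field_simp)
  · exact .inr (by field_simp)

end AdaptedBasis

section PauliForms

variable {R M : Type*} [CommRing R] [AddCommGroup M] [Module R M]

/-- The alternating bilinear forms attached to the identity and (up to sign) the Pauli matrices: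
for the basis `(e, J e, f, J f)` of a complex vector space, `∑ᵢ cᵢ • pauliForm b i` is the imaginary
part of the Hermitian form, conjugate-linear in its first argument, whose matrix in the complex
basis `(e, f)` is `[[c₀ + c₁, c₂ + i c₃], [c₂ - i c₃, c₀ - c₁]]`. -/
noncomputable def pauliForm (b : Basis (Fin 4) R M) : Fin 4 → M [⋀^Fin 2]→ₗ[R] R :=
  ![wedgeDual ![b.coord 0, b.coord 1] + wedgeDual ![b.coord 2, b.coord 3],
    wedgeDual ![b.coord 0, b.coord 1] - wedgeDual ![b.coord 2, b.coord 3],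
    wedgeDual ![b.coord 0, b.coord 3] - wedgeDual ![b.coord 1, b.coord 2],
    wedgeDual ![b.coord 0, b.coord 2] + wedgeDual ![b.coord 1, b.coord 3]]

theorem shuffleWedge_pauliForm (b : Basis (Fin 4) R M) (i j : Fin 4) :
    shuffleWedge b (pauliForm b i) (pauliForm b j) = Matrix.diagonal ![2, -2, -2, -2] i j := by
  fin_cases i <;> fin_cases j <;>
    simp [shuffleWedge, pauliForm, wedgeDual_pair_apply] <;> norm_num

theorem linearIndependent_pauliForm {K V : Type*} [Field K] [NeZero (2 : K)] [AddCommGroup V]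
    [Module K V] (b : Basis (Fin 4) K V) : LinearIndependent K (pauliForm b) := by
  refine LinearMap.linearIndependent_of_isOrthoᵢ (B := shuffleWedge b) ?_ fun i => ?_
  · refine LinearMap.isOrthoᵢ_def.2 fun i j hij => ?_
    rw [shuffleWedge_pauliForm, Matrix.diagonal_apply_ne _ hij]
  · rw [shuffleWedge_pauliForm, Matrix.diagonal_apply_eq]
    fin_cases i <;> simp [two_ne_zero]

namespace IsAdaptedBasis

theorem mem_invariantForms_iff {J : M →ₗ[R] M} {b : Basis (Fin 4) R M} (hb : IsAdaptedBasis J b)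
    {α : M [⋀^Fin 2]→ₗ[R] R} :
    α ∈ invariantForms J ↔
      α ![b 1, b 3] = α ![b 0, b 2] ∧ α ![b 1, b 2] = -α ![b 0, b 3] := by
  rw [mem_invariantForms_iff_basis b]
  constructor
  · intro h
    have h02 := h 0 2 (by decide)
    have h03 := h 0 3 (by decide)
    rw [hb.apply_zero, hb.apply_two] at h02
    rw [hb.apply_zero, hb.apply_three, alternating_neg_right] at h03
    exact ⟨h02, neg_eq_iff_eq_neg.1 h03⟩
  · rintro ⟨h13, h12⟩ i j hij
    fin_cases i <;> fin_cases j <;>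
      first
      | exact absurd hij (by decide)
      | simp [hb.apply_zero, hb.apply_one, hb.apply_two, hb.apply_three, alternating_neg_left,
          alternating_neg_right, h13, h12, alternating_swap α (b 0) (b 1),
          alternating_swap α (b 2) (b 3)]

theorem pauliForm_mem_invariantForms {J : M →ₗ[R] M} {b : Basis (Fin 4) R M}
    (hb : IsAdaptedBasis J b) (i : Fin 4) : pauliForm b i ∈ invariantForms J := by
  rw [hb.mem_invariantForms_iff]
  fin_cases i <;> simp [pauliForm, wedgeDual_pair_apply]

variable {K V : Type*} [Field K] [NeZero (2 : K)] [AddCommGroup V] [Module K V] {J : V →ₗ[K] V}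
  {b : Basis (Fin 4) K V}

theorem eq_sum_smul_pauliForm (hb : IsAdaptedBasis J b) {α : V [⋀^Fin 2]→ₗ[K] K}
    (hα : α ∈ invariantForms J) :
    α = ∑ i, ![(α ![b 0, b 1] + α ![b 2, b 3]) / 2, (α ![b 0, b 1] - α ![b 2, b 3]) / 2,
      α ![b 0, b 3], α ![b 0, b 2]] i • pauliForm b i := by
  obtain ⟨h13, h12⟩ := hb.mem_invariantForms_iff.1 hα
  refine alternating_ext_basis_of_lt b fun i j hij => ?_
  simp only [Fin.sum_univ_four, AlternatingMap.add_apply, AlternatingMap.smul_apply]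
  fin_cases i <;> fin_cases j <;>
    first
    | exact absurd hij (by decide)
    | simp [pauliForm, wedgeDual_pair_apply, h13, h12] <;> field_simp <;> ring

theorem span_range_pauliForm (hb : IsAdaptedBasis J b) :
    Submodule.span K (Set.range (pauliForm b)) = invariantForms J := by
  refine le_antisymm (Submodule.span_le.2 ?_) fun α hα => ?_
  · exact Set.range_subset_iff.2 hb.pauliForm_mem_invariantForms
  · rw [hb.eq_sum_smul_pauliForm hα]
    exact Submodule.sum_smul_mem _ _ fun i _ => Submodule.subset_span (Set.mem_range_self i)

theorem finrank_invariantForms (hb : IsAdaptedBasis J b) : finrank K (invariantForms J) = 4 := by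
  rw [← hb.span_range_pauliForm, finrank_span_eq_card (linearIndependent_pauliForm b),
    Fintype.card_fin]

end IsAdaptedBasis

end PauliForms

/-- Let `V` be a 4-dimensional real vector space, `J` a complex structure
on `V`, `ν` a fixed nonzero alternating 4-linear form on `V`, and `G` the pairing on
alternating bilinear forms induced by the wedge product (`α ∧ β = G α β • ν`, the wedge
being given by the shuffle sum).  Then the set of `J`-invariant alternating bilinear forms
is a 4-dimensional subspace, `G` restricts to a symmetric bilinear form on it, and this
restriction is nondegenerate of Lorentz signature. -/
theorem chern_moser_stmt_0
    (V : Type*) [AddCommGroup V] [Module ℝ V]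
    (hdim : Module.finrank ℝ V = 4)
    (J : V →ₗ[ℝ] V) (hJ : ∀ v : V, J (J v) = -v)
    (ν : AlternatingMap ℝ V ℝ (Fin 4)) (hν : ν ≠ 0)
    (G : AlternatingMap ℝ V ℝ (Fin 2) → AlternatingMap ℝ V ℝ (Fin 2) → ℝ)
    (hG : ∀ (α β : AlternatingMap ℝ V ℝ (Fin 2)) (x : Fin 4 → V),
      α ![x 0, x 1] * β ![x 2, x 3] - α ![x 0, x 2] * β ![x 1, x 3]
        + α ![x 0, x 3] * β ![x 1, x 2] + α ![x 2, x 3] * β ![x 0, x 1]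
        - α ![x 1, x 3] * β ![x 0, x 2] + α ![x 1, x 2] * β ![x 0, x 3]
      = G α β * ν x) :
    ∃ W : Submodule ℝ (AlternatingMap ℝ V ℝ (Fin 2)),
      -- (i) the J-invariant alternating bilinear forms are a 4-dimensional subspace
      (W : Set (AlternatingMap ℝ V ℝ (Fin 2)))
          = {α | ∀ x y : V, α ![J x, J y] = α ![x, y]} ∧
      Module.finrank ℝ W = 4 ∧
      -- (ii) G restricts to a symmetric bilinear form on W
      (∀ α ∈ W, ∀ β ∈ W, G α β = G β α) ∧
      -- (iii) Lorentz signature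
      ∃ (ξ : Fin 4 → AlternatingMap ℝ V ℝ (Fin 2)) (ε : ℝ),
        (ε = 1 ∨ ε = -1) ∧
        (∀ i, ξ i ∈ W) ∧
        LinearIndependent ℝ ξ ∧
        Submodule.span ℝ (Set.range ξ) = W ∧
        G (ξ 0) (ξ 0) = ε ∧
        (∀ k : Fin 4, k ≠ 0 → G (ξ k) (ξ k) = -ε) ∧
        (∀ a b : Fin 4, a ≠ b → G (ξ a) (ξ b) = 0) := by
  obtain ⟨b₀, hb₀⟩ := exists_isAdaptedBasis hdim hJ
  obtain ⟨b, hb, hνb⟩ := hb₀.exists_apply_eq_two_or_neg_two hν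
  have hνb_ne : ν b ≠ 0 := by rcases hνb with h | h <;> simp [h]
  have hwedge (α β) : shuffleWedge b α β = G α β * ν b := hG α β b
  have hgram (i j : Fin 4) : G (pauliForm b i) (pauliForm b j) =
      Matrix.diagonal ![2, -2, -2, -2] i j / ν b := by
    rw [eq_div_iff hνb_ne, ← hwedge, shuffleWedge_pauliForm]
  refine ⟨invariantForms J, rfl, hb.finrank_invariantForms, fun α _ β _ => ?symm,
    pauliForm b, 2 / ν b, ?sign, hb.pauliForm_mem_invariantForms, linearIndependent_pauliForm b,
    hb.span_range_pauliForm, hgram 0 0, fun k hk => ?diag, fun i j hij => ?orthogonal⟩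
  case symm =>
    exact mul_right_cancel₀ hνb_ne (by rw [← hwedge, ← hwedge, shuffleWedge_comm])
  case sign => rcases hνb with h | h <;> simp [h]
  case diag =>
    rw [hgram, Matrix.diagonal_apply_eq]
    obtain ⟨k, rfl⟩ := Fin.exists_succ_eq.2 hk
    fin_cases k <;> exact neg_div ..
  case orthogonal => rw [hgram, Matrix.diagonal_apply_ne _ hij, zero_div]
end

section
/- Every nondegenerate pair (H¹, H²) of Hermitian 2×2 complex matrices is equivalent to exactly one of the three model pairs (elliptic, parabolic, hyperbolic); moreover, no two distinct model pairs are equivalent to each other. (This is the algebraic content of Proposition 2.5: the osculating quadric {(z, w) ∈ ℂ⁴ : Im w₁ = zᴴ H¹ z, Im w₂ = zᴴ H² z} of a Levi non-degenerate, integrable CR manifold of dimension six and codimension two is, up to equivalence, exactly one of the three quadrics Im w₁ = Im(z₁ z̄₂), Im w₂ = Re(z₁ z̄₂); Im w₁ = |z₁|², Im w₂ = Re(z₁ z̄₂); Im w₁ = |z₁|², Im w₂ = |z₂|².) -/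
noncomputable section

/-- Equivalence of pairs of Hermitian `2×2` matrices: `(H¹,H²) ∼ (K¹,K²)` iff there are
`A ∈ GL₂(ℂ)` and `B ∈ GL₂(ℝ)` with `Kᵃ = Σ_b B_{ab} (Aᴴ Hᵇ A)`. -/
def PairEquiv (P Q : Matrix (Fin 2) (Fin 2) ℂ × Matrix (Fin 2) (Fin 2) ℂ) : Prop :=
  ∃ (A : Matrix (Fin 2) (Fin 2) ℂ) (B : Matrix (Fin 2) (Fin 2) ℝ),
    IsUnit A.det ∧ IsUnit B.det ∧
    Q.1 = B 0 0 • (A.conjTranspose * P.1 * A) + B 0 1 • (A.conjTranspose * P.2 * A) ∧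
    Q.2 = B 1 0 • (A.conjTranspose * P.1 * A) + B 1 1 • (A.conjTranspose * P.2 * A)

/-- The three model pairs: elliptic (`Im(z₁ z̄₂)`, `Re(z₁ z̄₂)`), parabolic
(`|z₁|²`, `Re(z₁ z̄₂)`) and hyperbolic (`|z₁|²`, `|z₂|²`). -/
def ModelPair : Fin 3 → Matrix (Fin 2) (Fin 2) ℂ × Matrix (Fin 2) (Fin 2) ℂ :=
  ![(!![0, Complex.I/2; -Complex.I/2, 0], !![0, 1/2; 1/2, 0]),
    (!![1, 0; 0, 0], !![0, 1/2; 1/2, 0]),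
    (!![1, 0; 0, 0], !![0, 0; 0, 1])]

/-!
For a pair of Hermitian forms, `det (x H + y K)` is a real binary quadratic form in `(x, y)`, and
the sign of its discriminant is invariant under equivalence: a congruence by `A` multiplies the
discriminant by `|det A|⁴` and a change of basis `B` of the pencil multiplies it by `(det B)²`.
The elliptic, parabolic and hyperbolic models have discriminants `-1/4`, `0` and `1`.

Conversely the roots of the form exhibit rank-one members of the (complexified) pencil. Two real
roots give two matrices `u uᴴ`, `v vᴴ`, up to real factors; a double root gives one such matrix
`v vᴴ`, at which the pencil lies in the tangent hyperplane of the cone `det = 0` and therefore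
contains some `v uᴴ + u vᴴ`; a pair of complex conjugate roots gives `u vᴴ` and its adjoint
`v uᴴ`. In each case the matrix with rows `uᴴ` and `vᴴ` carries the model onto the pencil, and it
is invertible because the forms have no common kernel.
-/

open Matrix QuadraticMap
open scoped ComplexOrder

section PencilDiscriminant

variable {R : Type*} [CommRing R]

/-- The discriminant of the binary quadratic form `det (x H + y K)` in `(x, y)`. -/
def pencilDiscrim (H K : Matrix (Fin 2) (Fin 2) R) : R :=
  discrim H.det (polar det H K) K.det

lemma det_smul_add_smul (H K : Matrix (Fin 2) (Fin 2) R) (x y : R) :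
    (x • H + y • K).det = H.det * x ^ 2 + polar det H K * (x * y) + K.det * y ^ 2 := by
  simp only [polar, det_fin_two, Matrix.add_apply, Matrix.smul_apply, smul_eq_mul]
  ring

lemma pencilDiscrim_smul_add_smul (H K : Matrix (Fin 2) (Fin 2) R) (x y z w : R) :
    pencilDiscrim (x • H + y • K) (z • H + w • K) =
      (x * w - y * z) ^ 2 * pencilDiscrim H K := by
  simp only [pencilDiscrim, discrim, polar, det_fin_two, Matrix.add_apply, Matrix.smul_apply,
    smul_eq_mul]
  ring

lemma pencilDiscrim_mul_mul (C H K A : Matrix (Fin 2) (Fin 2) R) :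
    pencilDiscrim (C * H * A) (C * K * A) = (C.det * A.det) ^ 2 * pencilDiscrim H K := by
  simp only [pencilDiscrim, discrim, polar, ← Matrix.add_mul, ← Matrix.mul_add, det_mul]
  ring

end PencilDiscriminant

lemma PairEquiv.sign_pencilDiscrim {P Q : Matrix (Fin 2) (Fin 2) ℂ × Matrix (Fin 2) (Fin 2) ℂ}
    (h : PairEquiv P Q) :
    SignType.sign (pencilDiscrim Q.1 Q.2).re = SignType.sign (pencilDiscrim P.1 P.2).re := by
  obtain ⟨A, B, hA, hB, h₁, h₂⟩ := h
  have hpos : 0 < B.det ^ 2 * Complex.normSq A.det ^ 2 :=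
    mul_pos (sq_pos_of_ne_zero hB.ne_zero) (pow_pos (Complex.normSq_pos.2 hA.ne_zero) 2)
  have hscale : pencilDiscrim Q.1 Q.2 =
      (B.det ^ 2 * Complex.normSq A.det ^ 2 : ℝ) * pencilDiscrim P.1 P.2 := by
    simp only [h₁, h₂, ← Complex.coe_smul]
    rw [pencilDiscrim_smul_add_smul, pencilDiscrim_mul_mul, det_conjTranspose, Complex.star_def,
      ← Complex.normSq_eq_conj_mul_self, det_fin_two B]
    push_cast
    ring
  rw [hscale, Complex.re_ofReal_mul, sign_mul, sign_pos hpos, one_mul]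

lemma pencilDiscrim_modelPair (i : Fin 3) :
    pencilDiscrim (ModelPair i).1 (ModelPair i).2 = (![-1 / 4, 0, 1] i : ℝ) := by
  fin_cases i
  · simp only [pencilDiscrim, discrim, polar, det_fin_two, ModelPair, Matrix.add_apply, of_apply,
      Fin.zero_eta, cons_val', cons_val_zero, cons_val_one, cons_val_fin_one]
    push_cast
    linear_combination (1 / 4 : ℂ) * Complex.I_sq
  all_goals simp [pencilDiscrim, discrim, polar, ModelPair, det_fin_two]

lemma sign_pencilDiscrim_modelPair_injective :
    Function.Injective fun i : Fin 3 ↦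
      SignType.sign (pencilDiscrim (ModelPair i).1 (ModelPair i).2).re := by
  have hsign (i : Fin 3) : SignType.sign (pencilDiscrim (ModelPair i).1 (ModelPair i).2).re =
      ![-1, 0, 1] i := by
    rw [pencilDiscrim_modelPair]
    fin_cases i
    · exact sign_neg (by norm_num)
    · exact sign_zero
    · exact sign_one
  simp only [hsign]
  decide

section RankOne

lemma mul_apply_swap_of_det_eq_zero {R : Type*} [CommRing R] {N : Matrix (Fin 2) (Fin 2) R}
    (hN : N.det = 0) (i j k l : Fin 2) : N i j * N k l = N i l * N k j := by
  rw [det_fin_two] at hN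
  fin_cases i <;> fin_cases j <;> fin_cases k <;> fin_cases l <;> dsimp <;> grind

lemma exists_eq_vecMulVec_of_det_eq_zero {F : Type*} [Field F] {N : Matrix (Fin 2) (Fin 2) F}
    (hN : N.det = 0) : ∃ u v, N = vecMulVec u v := by
  by_cases h0 : N = 0
  · exact ⟨0, 0, by rw [h0, vecMulVec_zero]⟩
  obtain ⟨i, j, hij⟩ : ∃ i j, N i j ≠ 0 := by
    contrapose! h0
    exact ext h0
  refine ⟨N.col j, (N i j)⁻¹ • N.row i, ?_⟩
  ext k l
  have hswap := mul_apply_swap_of_det_eq_zero hN i j k l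
  simp only [vecMulVec_apply, col_apply, row_apply, Pi.smul_apply, smul_eq_mul]
  field_simp
  linear_combination hswap

variable {𝕜 : Type*} [RCLike 𝕜]

lemma exists_det_eq_ofReal {n : Type*} [Fintype n] [DecidableEq n] {H : Matrix n n 𝕜}
    (hH : H.IsHermitian) : ∃ a : ℝ, H.det = a := by
  obtain ⟨a, ha⟩ := RCLike.conj_eq_iff_real.1 (show star H.det = H.det by
    rw [← det_conjTranspose, hH.eq])
  exact ⟨a, ha⟩

lemma exists_vecMulVec_star_self_eq_smul {H : Matrix (Fin 2) (Fin 2) 𝕜} (hH : H.IsHermitian)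
    (hdet : H.det = 0) (h0 : H ≠ 0) :
    ∃ c : ℝ, c ≠ 0 ∧ ∃ v, vecMulVec v (star v) = c • H := by
  have hcol (j : Fin 2) : vecMulVec (H.col j) (star (H.col j)) = H j j • H := by
    ext i k
    simp only [vecMulVec_apply, Pi.star_apply, col_apply, Matrix.smul_apply, smul_eq_mul, hH.apply]
    rw [mul_apply_swap_of_det_eq_zero hdet, mul_comm]
  obtain ⟨j, hj⟩ : ∃ j, H j j ≠ 0 := by
    contrapose! h0
    have hoff (i j : Fin 2) : H i j = 0 := by
      have := mul_apply_swap_of_det_eq_zero hdet i j j i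
      rw [h0, zero_mul, ← hH.apply j i] at this
      simpa using this
    exact ext hoff
  have hre : ((RCLike.re (H j j) : ℝ) : 𝕜) = H j j := hH.coe_re_apply_self j
  refine ⟨RCLike.re (H j j), fun h ↦ hj ?_, H.col j, ?_⟩
  · rw [← hre, h, RCLike.ofReal_zero]
  · rw [hcol, RCLike.real_smul_eq_coe_smul (K := 𝕜), hre]

lemma vecMulVec_mul_mul_vecMulVec {R n : Type*} [CommSemiring R] [Fintype n] (a b c d : n → R)
    (K : Matrix n n R) :
    vecMulVec a b * K * vecMulVec c d = (b ⬝ᵥ K *ᵥ c) • vecMulVec a d := by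
  rw [vecMulVec_mul, vecMulVec_mul_vecMulVec, vecMulVec_smul, ← dotProduct_mulVec]

section OrthogonalVector

variable {R : Type*} [CommRing R] [StarRing R]

/-- The vector orthogonal to `v` and of the same length, for the standard Hermitian form. -/
def orthogonalVec (v : Fin 2 → R) : Fin 2 → R :=
  ![-star (v 1), star (v 0)]

lemma vecMulVec_add_vecMulVec_orthogonalVec (v : Fin 2 → R) :
    vecMulVec v (star v) + vecMulVec (orthogonalVec v) (star (orthogonalVec v)) =
      (v ⬝ᵥ star v) • 1 := by
  ext i j
  fin_cases i <;> fin_cases j <;>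
    simp [orthogonalVec, vecMulVec_apply, dotProduct, -cons_vecMulVec] <;> ring

lemma polar_det_vecMulVec_star_self (v : Fin 2 → R) (K : Matrix (Fin 2) (Fin 2) R) :
    polar det (vecMulVec v (star v)) K =
      star (orthogonalVec v) ⬝ᵥ K *ᵥ orthogonalVec v := by
  simp only [polar, det_fin_two, Matrix.add_apply, vecMulVec_apply, Pi.star_apply, dotProduct,
    orthogonalVec, mulVec, Fin.sum_univ_two, cons_val_zero, cons_val_one, cons_val_fin_one,
    star_neg, star_star]
  ring

end OrthogonalVector

lemma exists_eq_vecMulVec_add_vecMulVec {v : Fin 2 → 𝕜} (hv : v ≠ 0)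
    {K : Matrix (Fin 2) (Fin 2) 𝕜} (hK : K.IsHermitian)
    (hpolar : polar det (vecMulVec v (star v)) K = 0) :
    ∃ u, K = vecMulVec v (star u) + vecMulVec u (star v) := by
  set w := orthogonalVec v
  set r := v ⬝ᵥ star v
  have hr : r ≠ 0 := mt dotProduct_self_star_eq_zero.1 hv
  have hww : star w ⬝ᵥ K *ᵥ w = 0 := by rw [← polar_det_vecMulVec_star_self, hpolar]
  have hstar (x y : Fin 2 → 𝕜) : star (star x ⬝ᵥ K *ᵥ y) = star y ⬝ᵥ K *ᵥ x := by
    rw [star_dotProduct, star_star, star_mulVec, hK.eq, dotProduct_mulVec]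
  -- Multiply `K` on both sides by `r • 1 = v vᴴ + w wᴴ`; the term in `w wᴴ` vanishes by `hww`.
  have hexpand : r ^ 2 • K = (star v ⬝ᵥ K *ᵥ v) • vecMulVec v (star v) +
      (star v ⬝ᵥ K *ᵥ w) • vecMulVec v (star w) + (star w ⬝ᵥ K *ᵥ v) • vecMulVec w (star v) := by
    calc r ^ 2 • K = (r • 1) * K * (r • 1) := by simp [smul_smul, pow_two]
      _ = _ := by
        rw [← vecMulVec_add_vecMulVec_orthogonalVec]
        simp only [Matrix.add_mul, Matrix.mul_add, vecMulVec_mul_mul_vecMulVec, w, hww, zero_smul]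
        abel
  have hrstar : star r = r := (dotProduct_star v v).symm
  have hα := hstar v v
  rw [← hstar w v] at hexpand
  generalize star v ⬝ᵥ K *ᵥ v = α at hα hexpand
  generalize star w ⬝ᵥ K *ᵥ v = β at hexpand
  refine ⟨(r ^ 2)⁻¹ • ((2⁻¹ * α) • v + β • w),
    smul_right_injective _ (pow_ne_zero 2 hr) (hexpand.trans ?_)⟩
  simp only [star_smul, star_add, star_mul', star_inv₀, star_pow, star_ofNat, hrstar, hα,
    vecMulVec_add, add_vecMulVec, vecMulVec_smul, smul_vecMulVec]
  match_scalars <;> field_simp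
  ring

end RankOne

section BinaryQuadratic

variable {F : Type*} [Field F] [NeZero (2 : F)] {a b c : F}

lemma exists_ne_zero_of_discrim_eq_zero (h : discrim a b c = 0) :
    ∃ x y, (x ≠ 0 ∨ y ≠ 0) ∧ a * x ^ 2 + b * (x * y) + c * y ^ 2 = 0 := by
  rw [discrim] at h
  by_cases ha : a = 0
  · exact ⟨1, 0, Or.inl one_ne_zero, by simp [ha]⟩
  · exact ⟨-b, 2 * a, Or.inr (mul_ne_zero two_ne_zero ha), by linear_combination -a * h⟩

lemma exists_independent_of_discrim_eq_sq {s : F} (hs : s ≠ 0) (h : discrim a b c = s ^ 2) :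
    ∃ x y z w, x * w - y * z ≠ 0 ∧ a * x ^ 2 + b * (x * y) + c * y ^ 2 = 0 ∧
      a * z ^ 2 + b * (z * w) + c * w ^ 2 = 0 := by
  rw [discrim] at h
  by_cases ha : a = 0
  · have hb : b ≠ 0 := by
      rintro rfl
      exact hs (by simpa [ha] using h.symm)
    exact ⟨1, 0, -c, b, by simpa using hb, by simp [ha], by rw [ha]; ring⟩
  · refine ⟨-b + s, 2 * a, -b - s, 2 * a, ?_, by linear_combination -a * h,
      by linear_combination -a * h⟩
    have : 2 * 2 * a * s ≠ 0 := by simp [ha, hs, two_ne_zero]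
    convert this using 1
    ring

lemma exists_complex_root_im_ne_zero {a b c : ℝ} (h : discrim a b c < 0) :
    ∃ μ : ℂ, μ.im ≠ 0 ∧ a * (μ * μ) + b * μ + c = 0 := by
  have ha : a ≠ 0 := by
    rintro rfl
    exact absurd h (by simp [discrim, sq_nonneg])
  obtain ⟨s, hs⟩ := IsAlgClosed.exists_eq_mul_self (discrim a b c : ℂ)
  obtain ⟨μ, hμ⟩ := exists_quadratic_eq_zero (Complex.ofReal_ne_zero.2 ha) ⟨s, hs⟩
  refine ⟨μ, fun him ↦ ?_, hμ⟩
  obtain ⟨x, rfl⟩ : ∃ x : ℝ, (x : ℂ) = μ := ⟨μ.re, Complex.ext rfl him.symm⟩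
  have hx : a * (x * x) + b * x + c = 0 := mod_cast hμ
  exact h.not_ge (discrim_eq_sq_of_quadratic_eq_zero hx ▸ sq_nonneg _)

end BinaryQuadratic

section NormalForms

lemma conjTranspose_of_mul_mul_of {R n : Type*} [CommRing R] [StarRing R]
    (M : Matrix (Fin 2) (Fin 2) R) (u v : n → R) :
    (of ![star u, star v])ᴴ * M * of ![star u, star v] =
      M 0 0 • vecMulVec u (star u) + M 0 1 • vecMulVec u (star v) +
        M 1 0 • vecMulVec v (star u) + M 1 1 • vecMulVec v (star v) := by
  ext i j
  simp only [mul_apply, conjTranspose_apply, of_apply, cons_val', Pi.star_apply, cons_val_fin_one,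
    Fin.sum_univ_two, cons_val_zero, cons_val_one, star_star, Matrix.add_apply, Matrix.smul_apply,
    vecMulVec_apply, smul_eq_mul]
  ring

variable {H K : Matrix (Fin 2) (Fin 2) ℂ}

lemma exists_real_det_smul_add_smul (hH : H.IsHermitian) (hK : K.IsHermitian) :
    ∃ a b c : ℝ, pencilDiscrim H K = (discrim a b c : ℝ) ∧
      ∀ x y : ℂ, (x • H + y • K).det = a * x ^ 2 + b * (x * y) + c * y ^ 2 := by
  obtain ⟨a, ha : H.det = (a : ℂ)⟩ := exists_det_eq_ofReal hH
  obtain ⟨c, hc : K.det = (c : ℂ)⟩ := exists_det_eq_ofReal hK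
  obtain ⟨d, hd : (H + K).det = (d : ℂ)⟩ := exists_det_eq_ofReal (hH.add hK)
  have hb : polar det H K = (d - a - c : ℝ) := by simp [polar, ha, hc, hd]
  exact ⟨a, d - a - c, c, by simp [pencilDiscrim, discrim, ha, hb, hc],
    fun x y ↦ by rw [det_smul_add_smul, ha, hb, hc]⟩

lemma pairEquiv_of_conjTranspose_mul_mul (hker : ∀ z, H *ᵥ z = 0 → K *ᵥ z = 0 → z = 0)
    {Q : Matrix (Fin 2) (Fin 2) ℂ × Matrix (Fin 2) (Fin 2) ℂ} (A : Matrix (Fin 2) (Fin 2) ℂ)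
    {x y z w : ℝ} (hdet : x * w - y * z ≠ 0) (h₁ : Aᴴ * Q.1 * A = x • H + y • K)
    (h₂ : Aᴴ * Q.2 * A = z • H + w • K) : PairEquiv (H, K) Q := by
  have hH : (x * w - y * z) • H = Aᴴ * (w • Q.1 - y • Q.2) * A := by
    simp only [Matrix.mul_sub, Matrix.sub_mul, Matrix.mul_smul, Matrix.smul_mul, h₁, h₂]
    module
  have hK : (x * w - y * z) • K = Aᴴ * (x • Q.2 - z • Q.1) * A := by
    simp only [Matrix.mul_sub, Matrix.sub_mul, Matrix.mul_smul, Matrix.smul_mul, h₁, h₂]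
    module
  have hA : IsUnit A.det := by
    rw [isUnit_iff_ne_zero, ne_eq, ← exists_mulVec_eq_zero_iff]
    rintro ⟨t, ht, hAt⟩
    refine ht (hker t ?_ ?_) <;> refine (smul_eq_zero_iff_right hdet).1 ?_
    · rw [← smul_mulVec, hH, ← mulVec_mulVec, hAt, mulVec_zero]
    · rw [← smul_mulVec, hK, ← mulVec_mulVec, hAt, mulVec_zero]
  have hcancel (M : Matrix (Fin 2) (Fin 2) ℂ) : A⁻¹ᴴ * (Aᴴ * M * A) * A⁻¹ = M := by
    rw [Matrix.mul_assoc Aᴴ, ← Matrix.mul_assoc, ← conjTranspose_mul, Matrix.mul_nonsing_inv A hA,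
      conjTranspose_one, Matrix.one_mul, Matrix.mul_nonsing_inv_cancel_right _ _ hA]
  refine ⟨A⁻¹, !![x, y; z, w], isUnit_nonsing_inv_det A hA, ?_, ?_, ?_⟩
  · rwa [isUnit_iff_ne_zero, det_fin_two_of]
  · rw [← hcancel Q.1, h₁]
    simp [Matrix.mul_add, Matrix.add_mul]
  · rw [← hcancel Q.2, h₂]
    simp [Matrix.mul_add, Matrix.add_mul]

lemma isHermitian_smul_add_smul (hH : H.IsHermitian) (hK : K.IsHermitian) (x y : ℝ) :
    (x • H + y • K).IsHermitian :=
  (hH.smul (.all x)).add (hK.smul (.all y))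

theorem pairEquiv_elliptic_of_pencilDiscrim_neg (hH : H.IsHermitian) (hK : K.IsHermitian)
    (hker : ∀ z, H *ᵥ z = 0 → K *ᵥ z = 0 → z = 0) (hD : (pencilDiscrim H K).re < 0) :
    PairEquiv (H, K) (ModelPair 0) := by
  obtain ⟨a, b, c, habc, hdet⟩ := exists_real_det_smul_add_smul hH hK
  obtain ⟨μ, hμ, hroot⟩ := exists_complex_root_im_ne_zero (by simpa [habc] using hD)
  obtain ⟨u, v, hN⟩ := exists_eq_vecMulVec_of_det_eq_zero (N := μ • H + (1 : ℂ) • K) (by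
    rw [hdet]
    linear_combination hroot)
  obtain ⟨v, rfl⟩ : ∃ v', v = star v' := ⟨star v, (star_star v).symm⟩
  rw [one_smul] at hN
  have hN' : star μ • H + K = vecMulVec v (star u) := by
    simpa [hH.eq, hK.eq, conjTranspose_vecMulVec] using congrArg conjTranspose hN
  set A := of ![star u, star v]
  have hmodel₁ : Aᴴ * (ModelPair 0).1 * A =
      (Complex.I / 2) • vecMulVec u (star v) - (Complex.I / 2) • vecMulVec v (star u) := by
    simp [A, conjTranspose_of_mul_mul_of, ModelPair, neg_div, sub_eq_add_neg]
  have hmodel₂ : Aᴴ * (ModelPair 0).2 * A =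
      (1 / 2 : ℂ) • vecMulVec u (star v) + (1 / 2 : ℂ) • vecMulVec v (star u) := by
    simp [A, conjTranspose_of_mul_mul_of, ModelPair]
  refine pairEquiv_of_conjTranspose_mul_mul hker A (x := -μ.im) (y := 0) (z := μ.re) (w := 1)
    (by simpa using hμ) ?_ ?_
  · have him : μ - star μ = 2 * μ.im * Complex.I := mod_cast Complex.sub_conj μ
    rw [hmodel₁, ← hN, ← hN', ← Complex.coe_smul, ← Complex.coe_smul]
    match_scalars
    · linear_combination Complex.I / 2 * him + μ.im * Complex.I_sq
    · simp
  · have hre : μ + star μ = 2 * μ.re := mod_cast Complex.add_conj μ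
    rw [hmodel₂, ← hN, ← hN', ← Complex.coe_smul, ← Complex.coe_smul]
    match_scalars
    · linear_combination 1 / 2 * hre
    · norm_num

lemma exists_vecMulVec_star_self_eq_smul_add_smul (hH : H.IsHermitian) (hK : K.IsHermitian)
    (hind : LinearIndependent ℝ ![H, K]) {x y : ℝ} (hxy : x ≠ 0 ∨ y ≠ 0)
    (hdet : (x • H + y • K).det = 0) :
    ∃ c : ℝ, c ≠ 0 ∧ ∃ v, vecMulVec v (star v) = (c * x) • H + (c * y) • K := by
  have h0 : x • H + y • K ≠ 0 := fun h ↦ by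
    obtain ⟨hx, hy⟩ := LinearIndependent.pair_iff.1 hind x y h
    exact hxy.elim (· hx) (· hy)
  obtain ⟨c, hc, v, hv⟩ :=
    exists_vecMulVec_star_self_eq_smul (isHermitian_smul_add_smul hH hK x y) hdet h0
  exact ⟨c, hc, v, by rw [hv, smul_add, smul_smul, smul_smul]⟩

theorem pairEquiv_parabolic_of_pencilDiscrim_eq_zero (hH : H.IsHermitian) (hK : K.IsHermitian)
    (hind : LinearIndependent ℝ ![H, K])
    (hker : ∀ z, H *ᵥ z = 0 → K *ᵥ z = 0 → z = 0) (hD : (pencilDiscrim H K).re = 0) :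
    PairEquiv (H, K) (ModelPair 1) := by
  obtain ⟨a, b, c, habc, hdet⟩ := exists_real_det_smul_add_smul hH hK
  rw [habc, Complex.ofReal_re] at hD
  obtain ⟨x, y, hxy, hroot⟩ := exists_ne_zero_of_discrim_eq_zero hD
  obtain ⟨r, hr, v, hv⟩ := exists_vecMulVec_star_self_eq_smul_add_smul hH hK hind hxy (by
    simp only [← Complex.coe_smul]
    rw [hdet]
    exact mod_cast hroot)
  have hsq : x * x + y * y ≠ 0 := by
    contrapose! hxy
    exact mul_self_add_mul_self_eq_zero.1 hxy
  have hv0 : v ≠ 0 := by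
    rintro rfl
    obtain ⟨hx, hy⟩ := LinearIndependent.pair_iff.1 hind (r * x) (r * y) (by simpa using hv.symm)
    exact hxy.elim (· (by simpa [hr] using hx)) (· (by simpa [hr] using hy))
  have hpolar : polar det (vecMulVec v (star v)) ((-y) • H + x • K) = 0 := by
    have hzero : pencilDiscrim (vecMulVec v (star v)) ((-y) • H + x • K) = 0 := by
      simp only [hv, ← Complex.coe_smul]
      rw [pencilDiscrim_smul_add_smul, habc, hD, Complex.ofReal_zero, mul_zero]
    simpa [pencilDiscrim, discrim, det_vecMulVec] using hzero
  obtain ⟨u, hu⟩ :=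
    exists_eq_vecMulVec_add_vecMulVec hv0 (isHermitian_smul_add_smul hH hK (-y) x) hpolar
  refine pairEquiv_of_conjTranspose_mul_mul hker (of ![star v, star u])
    (x := r * x) (y := r * y) (z := -y / 2) (w := x / 2) ?_ ?_ ?_
  · convert mul_ne_zero (div_ne_zero hr two_ne_zero) hsq using 1
    ring
  · simp [conjTranspose_of_mul_mul_of, ModelPair, hv]
  · have hsplit : (-y / 2) • H + (x / 2) • K = (2⁻¹ : ℂ) • ((-y) • H + x • K) := by
      module
    rw [hsplit, hu]
    simp [conjTranspose_of_mul_mul_of, ModelPair]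

theorem pairEquiv_hyperbolic_of_pencilDiscrim_pos (hH : H.IsHermitian) (hK : K.IsHermitian)
    (hind : LinearIndependent ℝ ![H, K])
    (hker : ∀ z, H *ᵥ z = 0 → K *ᵥ z = 0 → z = 0) (hD : 0 < (pencilDiscrim H K).re) :
    PairEquiv (H, K) (ModelPair 2) := by
  obtain ⟨a, b, c, habc, hdet⟩ := exists_real_det_smul_add_smul hH hK
  rw [habc, Complex.ofReal_re] at hD
  obtain ⟨x, y, z, w, hxyzw, hxy, hzw⟩ := exists_independent_of_discrim_eq_sq
    (Real.sqrt_pos.2 hD).ne' (Real.sq_sqrt hD.le).symm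
  have hrankOne {x y : ℝ} (hne : x ≠ 0 ∨ y ≠ 0)
      (hroot : a * x ^ 2 + b * (x * y) + c * y ^ 2 = 0) :
      ∃ r : ℝ, r ≠ 0 ∧ ∃ v, vecMulVec v (star v) = (r * x) • H + (r * y) • K := by
    refine exists_vecMulVec_star_self_eq_smul_add_smul hH hK hind hne ?_
    simp only [← Complex.coe_smul]
    rw [hdet]
    exact mod_cast hroot
  obtain ⟨r, hr, u, hu⟩ := hrankOne (by grind) hxy
  obtain ⟨s, hs, v, hv⟩ := hrankOne (by grind) hzw
  refine pairEquiv_of_conjTranspose_mul_mul hker (of ![star u, star v])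
    (x := r * x) (y := r * y) (z := s * z) (w := s * w) ?_ ?_ ?_
  · convert mul_ne_zero (mul_ne_zero hr hs) hxyzw using 1
    ring
  · simp [conjTranspose_of_mul_mul_of, ModelPair, hu]
  · simp [conjTranspose_of_mul_mul_of, ModelPair, hv]

end NormalForms

/-- Every nondegenerate pair of Hermitian `2×2` complex matrices is
equivalent to exactly one of the three model pairs (elliptic, parabolic, hyperbolic);
moreover no two distinct model pairs are equivalent.  (Algebraic content of
Proposition 2.5 on osculating quadrics.) -/
theorem chern_moser_stmt_7 :
    (∀ H1 H2 : Matrix (Fin 2) (Fin 2) ℂ, H1.IsHermitian → H2.IsHermitian →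
      LinearIndependent ℝ ![H1, H2] →
      (∀ z : Fin 2 → ℂ, H1.mulVec z = 0 → H2.mulVec z = 0 → z = 0) →
      ∃! i : Fin 3, PairEquiv (H1, H2) (ModelPair i)) ∧
    (∀ i j : Fin 3, i ≠ j → ¬ PairEquiv (ModelPair i) (ModelPair j)) := by
  refine ⟨fun H1 H2 hH1 hH2 hind hker ↦ ?_,
    fun i j hij h ↦ hij (sign_pencilDiscrim_modelPair_injective h.sign_pencilDiscrim.symm)⟩
  refine existsUnique_of_exists_of_unique ?_ fun i j hi hj ↦
    sign_pencilDiscrim_modelPair_injective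
      (hi.sign_pencilDiscrim.trans hj.sign_pencilDiscrim.symm)
  rcases lt_trichotomy (pencilDiscrim H1 H2).re 0 with hD | hD | hD
  · exact ⟨0, pairEquiv_elliptic_of_pencilDiscrim_neg hH1 hH2 hker hD⟩
  · exact ⟨1, pairEquiv_parabolic_of_pencilDiscrim_eq_zero hH1 hH2 hind hker hD⟩
  · exact ⟨2, pairEquiv_hyperbolic_of_pencilDiscrim_pos hH1 hH2 hind hker hD⟩
end
end

section
/- (The key computation of §5.2, formulas (5.8)–(5.10).) Suppose σ, τ ∈ ℂ and Φ is the 2-form Φ = −E⁰₀ ∧ Ω + Ē¹ ∧ E² + σ E¹ ∧ Ω̄ + τ Ē² ∧ Ω̄. Let Cⁱⱼ, Bⁱ, Bⁱ_b, B̂ⱼ, B̃ⱼ, Â, Ã ∈ ℂ (i, j ∈ {1, 2}) with the matrix (Cⁱⱼ) invertible, and define Ω' = Ω, E^{i′} = Σⱼ Cⁱⱼ Eʲ + Bⁱ Ω + Bⁱ_b Ω̄, E⁰₀′ = E⁰₀ + Σⱼ B̂ⱼ Eʲ + Σⱼ B̃ⱼ Ēʲ + Â Ω + Ã Ω̄,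 with Ē^{i′}, Ω̄′, Ē⁰₀′ their complex conjugates (so Ē^{i′} = Σⱼ C̄ⁱⱼ Ēʲ + B̄ⁱ Ω̄ + B̄ⁱ_b Ω). If there exist σ′, τ′ ∈ ℂ with Φ = −E⁰₀′ ∧ Ω′ + Ē¹′ ∧ E²′ + σ′ E¹′ ∧ Ω̄′ + τ′ Ē²′ ∧ Ω̄′, then necessarily C¹₁ C̄²₂ = 1, C¹₂ = C²₁ = 0, B¹ = B²_b = 0, B̃₁ = C̄¹₁ B², B̂₂ = −B̄¹_b C²₂, B̂₁ = B̃₂ = Ã = 0, and moreover σ′ = C̄²₂ σ and τ′ = C¹₁ τ. -/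
open ExteriorAlgebra

/-!
Expand the difference of the two expressions for `Φ` over the wedges of pairs from
`Ē¹, Ē², E¹, E², Ω̄, Ω`: the term `E⁰₀ ∧ Ω` cancels because `E⁰₀` is only translated, so this is a
combination of wedges of six independent covectors and each of its coefficients vanishes.
Modulo `Ω` and `Ω̄` one reads off `Ē¹′ ∧ E²′ ≡ Ē¹ ∧ E²`, which makes `C` diagonal with
`C¹₁ C̄²₂ = 1`; the coefficients of the `· ∧ Ω̄` then give `B¹`, `B²_b`, `σ′`, `τ′`, and those of
the `· ∧ Ω` give `B̂`, `B̃`, `Ã`.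
-/

section WedgePairing

variable {R M : Type*} [CommRing R] [AddCommGroup M] [Module R M]

/-- The linear functional on the exterior algebra induced by covectors `f₁, …, fₙ`: the determinant
pairing on `n`-fold wedges, extended by zero to the other degrees. -/
noncomputable def wedgePairing {n : ℕ} (f : Fin n → Module.Dual R M) :
    ExteriorAlgebra R M →ₗ[R] R :=
  liftAlternating (Pi.single n (Matrix.detRowAlternating.compLinearMap (LinearMap.pi f)))

lemma wedgePairing_ιMulti {n : ℕ} (f : Fin n → Module.Dual R M) (x : Fin n → M) :
    wedgePairing f (ιMulti R n x) = (Matrix.of fun i j => f j (x i)).det := by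
  rw [wedgePairing, liftAlternating_apply_ιMulti, Pi.single_eq_same]
  rfl

lemma wedgePairing_ι_mul_ι (f g : Module.Dual R M) (x y : M) :
    wedgePairing ![f, g] (ι R x * ι R y) = f x * g y - g x * f y := by
  simpa [ιMulti_apply, Matrix.det_fin_two] using wedgePairing_ιMulti ![f, g] ![x, y]

end WedgePairing

section WedgeSum

variable {R K M I : Type*} [CommRing R] [Field K] [AddCommGroup M]

/-- The element `∑ᵢⱼ Aᵢⱼ vᵢ ∧ vⱼ` of the exterior algebra. The matrix `A` is arbitrary, so only its
antisymmetrization matters. -/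
def wedgeSum [Fintype I] [Module R M] (v : I → M) (A : Matrix I I R) : ExteriorAlgebra R M :=
  ∑ i, ∑ j, A i j • (ι R (v i) * ι R (v j))

lemma exists_dual_family_of_linearIndependent [Module K M] [DecidableEq I] {v : I → M}
    (hv : LinearIndependent K v) :
    ∃ f : I → Module.Dual K M, ∀ i j, f i (v j) = if i = j then 1 else 0 := by
  obtain ⟨g, hg⟩ := (Finsupp.linearCombination K v).exists_leftInverse_of_injective
    (LinearMap.ker_eq_bot.mpr hv)
  refine ⟨fun i => Finsupp.lapply i ∘ₗ g, fun i j => ?_⟩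
  have hgv : g (v j) = Finsupp.single j 1 := by
    simpa using LinearMap.congr_fun hg (Finsupp.single j 1)
  simp [hgv, Finsupp.single_apply, eq_comm]

lemma isSymm_of_wedgeSum_eq_zero [Fintype I] [Module K M] {v : I → M} (hv : LinearIndependent K v)
    {A : Matrix I I K} (hA : wedgeSum v A = 0) : A.IsSymm := by
  classical
  obtain ⟨f, hf⟩ := exists_dual_family_of_linearIndependent hv
  refine Matrix.IsSymm.ext fun i j => ?_
  have hij := congrArg (wedgePairing ![f j, f i]) hA
  simpa [wedgeSum, wedgePairing_ι_mul_ι, hf, mul_sub, Finset.sum_sub_distrib,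
    sub_eq_zero, eq_comm] using hij

end WedgeSum

/-- The half `Ω, E¹, E², E⁰₀` of a coframe whose other half consists of the conjugates. -/
structure Coframe (M : Type*) where
  (Om E1 E2 E00 : M)

/-- The coefficients of the change of coframe `Ω′ = Ω`, `E^{i′} = Σⱼ Cⁱⱼ Eʲ + Bⁱ Ω + Bⁱ_b Ω̄`,
`E⁰₀′ = E⁰₀ + Σⱼ B̂ⱼ Eʲ + Σⱼ B̃ⱼ Ēʲ + Â Ω + Ã Ω̄`; the suffixes `b`, `h`, `t` stand for the
subscript `b`, the hat and the tilde. -/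
structure CoframeChange (R : Type*) where
  (C11 C12 C21 C22 B1 B2 B1b B2b Bh1 Bh2 Bt1 Bt2 Ah At : R)

section Coframe

variable {R M : Type*} [CommRing R] [AddCommGroup M]

/-- The 2-form `Φ = −E⁰₀ ∧ Ω + Ē¹ ∧ E² + σ E¹ ∧ Ω̄ + τ Ē² ∧ Ω̄` attached to a coframe. -/
def Coframe.form [Module R M] (conj : M → M) (e : Coframe M) (σ τ : R) : ExteriorAlgebra R M :=
  -(ι R e.E00 * ι R e.Om) + ι R (conj e.E1) * ι R e.E2
    + σ • (ι R e.E1 * ι R (conj e.Om)) + τ • (ι R (conj e.E2) * ι R (conj e.Om))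

/-- The covectors `Ē¹, Ē², E¹, E², Ω̄, Ω`, which the change of coframe adds to `E⁰₀`. They are
ordered so that the wedges in `Φ` other than `E⁰₀ ∧ Ω` have increasing indices. -/
def Coframe.horizontal (conj : M → M) (e : Coframe M) : Fin 6 → M :=
  ![conj e.E1, conj e.E2, e.E1, e.E2, conj e.Om, e.Om]

namespace CoframeChange

/-- The transformed coframe `Ω′, E¹′, E²′, E⁰₀′`. -/
def apply [Module R M] (g : CoframeChange R) (conj : M → M) (e : Coframe M) : Coframe M where
  Om := e.Om
  E1 := g.C11 • e.E1 + g.C12 • e.E2 + g.B1 • e.Om + g.B1b • conj e.Om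
  E2 := g.C21 • e.E1 + g.C22 • e.E2 + g.B2 • e.Om + g.B2b • conj e.Om
  E00 := e.E00 + g.Bh1 • e.E1 + g.Bh2 • e.E2 + g.Bt1 • conj e.E1 + g.Bt2 • conj e.E2
    + g.Ah • e.Om + g.At • conj e.Om

/-- The coefficients of `Φ′ − Φ` on the wedges of pairs of the covectors `Coframe.horizontal`, where
`Φ` has parameters `σ, τ` and `Φ′` is built from the transformed coframe with parameters
`σ′, τ′`. -/
def formDiff [StarRing R] (g : CoframeChange R) (σ τ σ' τ' : R) : Matrix (Fin 6) (Fin 6) R :=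
  !![0, 0, star g.C11 * g.C21, star g.C11 * g.C22 - 1,
      star g.C11 * g.B2b + τ' * star g.C21, star g.C11 * g.B2 - g.Bt1;
    0, 0, star g.C12 * g.C21, star g.C12 * g.C22,
      star g.C12 * g.B2b + τ' * star g.C22 - τ, star g.C12 * g.B2 - g.Bt2;
    0, 0, 0, 0, σ' * g.C11 - star g.B1 * g.C21 - σ, -(star g.B1b * g.C21) - g.Bh1;
    0, 0, 0, 0, σ' * g.C12 - star g.B1 * g.C22, -(star g.B1b * g.C22) - g.Bh2;
    0, 0, 0, 0, 0,
      star g.B1 * g.B2 - star g.B1b * g.B2b - σ' * g.B1 - τ' * star g.B2b - g.At;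
    0, 0, 0, 0, 0, 0]

theorem form_apply_sub_form [StarRing R] [Module R M] (g : CoframeChange R)
    {conj : M →ₛₗ[starRingEnd R] M} (hconj : Function.Involutive conj)
    (e : Coframe M) (σ τ σ' τ' : R) :
    (g.apply conj e).form conj σ' τ' - e.form conj σ τ =
      wedgeSum (e.horizontal conj) (g.formDiff σ τ σ' τ') := by
  have swap (x y : M) : ι R x * ι R y = -(ι R y * ι R x) :=
    eq_neg_of_add_eq_zero_left (ι_add_mul_swap x y)
  simp only [wedgeSum, Fin.sum_univ_six, Coframe.form, Coframe.horizontal, apply, formDiff]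
  simp only [map_add, map_smul, LinearMap.map_smulₛₗ, starRingEnd_apply, hconj e.Om, add_mul,
    mul_add, smul_mul_assoc, mul_smul_comm, ι_sq_zero, swap e.Om e.E1, swap e.Om e.E2,
    swap e.Om (conj e.Om), swap (conj e.Om) e.E1, swap (conj e.Om) e.E2, Matrix.of_apply,
    Matrix.cons_val]
  module

section Coefficients

variable [StarRing R] {g : CoframeChange R} {σ τ σ' τ' : R}

lemma diagonal_of_isSymm_formDiff (h : (g.formDiff σ τ σ' τ').IsSymm) :
    g.C11 * star g.C22 = 1 ∧ g.C12 = 0 ∧ g.C21 = 0 := by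
  -- `formDiff` is strictly upper triangular, so `h.apply j i` with `i < j` says that its entry at
  -- `(i, j)` vanishes.
  have hE1bE2 : star g.C11 * g.C22 = 1 := by simpa [formDiff, sub_eq_zero] using h.apply 3 0
  have hE1bE1 : star g.C11 * g.C21 = 0 := by simpa [formDiff] using h.apply 2 0
  have hE2bE2 : star g.C12 * g.C22 = 0 := by simpa [formDiff] using h.apply 3 1
  have hC : g.C11 * star g.C22 = 1 := by simpa [mul_comm] using congrArg star hE1bE2
  have hC12 : g.C12 * star g.C22 = 0 := by simpa [mul_comm] using congrArg star hE2bE2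
  refine ⟨hC, ?_, ?_⟩
  · linear_combination g.C11 * hC12 - g.C12 * hC
  · linear_combination g.C22 * hE1bE1 - g.C21 * hE1bE2

lemma B_and_parameters_of_isSymm_formDiff (h : (g.formDiff σ τ σ' τ').IsSymm) :
    g.B1 = 0 ∧ g.B2b = 0 ∧ σ' = star g.C22 * σ ∧ τ' = g.C11 * τ := by
  obtain ⟨hC, hC12, hC21⟩ := diagonal_of_isSymm_formDiff h
  have hE1 : σ' * g.C11 = σ := by simpa [formDiff, hC21, sub_eq_zero] using h.apply 4 2
  have hE2 : star g.B1 * g.C22 = 0 := by simpa [formDiff, hC12] using h.apply 4 3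
  have hE1b : star g.C11 * g.B2b = 0 := by simpa [formDiff, hC21] using h.apply 4 0
  have hE2b : τ' * star g.C22 = τ := by simpa [formDiff, hC12, sub_eq_zero] using h.apply 4 1
  have hC' : star g.C11 * g.C22 = 1 := by simpa [mul_comm] using congrArg star hC
  have hB1 : g.B1 * star g.C22 = 0 := by simpa [mul_comm] using congrArg star hE2
  refine ⟨?_, ?_, ?_, ?_⟩
  · linear_combination g.C11 * hB1 - g.B1 * hC
  · linear_combination g.C22 * hE1b - g.B2b * hC'
  · linear_combination star g.C22 * hE1 - σ' * hC
  · linear_combination g.C11 * hE2b - τ' * hC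

lemma E00_coeffs_of_isSymm_formDiff (h : (g.formDiff σ τ σ' τ').IsSymm) :
    g.Bt1 = star g.C11 * g.B2 ∧ g.Bh2 = -(star g.B1b * g.C22) ∧
      g.Bh1 = 0 ∧ g.Bt2 = 0 ∧ g.At = 0 := by
  obtain ⟨-, hC12, hC21⟩ := diagonal_of_isSymm_formDiff h
  obtain ⟨hB1, hB2b, -, -⟩ := B_and_parameters_of_isSymm_formDiff h
  have hE1b : star g.C11 * g.B2 = g.Bt1 := by simpa [formDiff, sub_eq_zero] using h.apply 5 0
  have hE2 : -(star g.B1b * g.C22) = g.Bh2 := by simpa [formDiff, sub_eq_zero] using h.apply 5 3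
  have hE1 : g.Bh1 = 0 := by simpa [formDiff, hC21] using h.apply 5 2
  have hE2b : g.Bt2 = 0 := by simpa [formDiff, hC12] using h.apply 5 1
  have hOmb : g.At = 0 := by simpa [formDiff, hB1, hB2b] using h.apply 5 4
  exact ⟨hE1b.symm, hE2.symm, hE1, hE2b, hOmb⟩

end Coefficients

end CoframeChange

end Coframe

theorem chern_moser_stmt_19_general {K M : Type*} [Field K] [StarRing K] [AddCommGroup M]
    [Module K M] {conj : M →ₛₗ[starRingEnd K] M} (hconj : Function.Involutive conj)
    {e : Coframe M} (he : LinearIndependent K (e.horizontal conj)) {g : CoframeChange K}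
    {σ τ σ' τ' : K} (hΦ : e.form conj σ τ = (g.apply conj e).form conj σ' τ') :
    g.C11 * star g.C22 = 1 ∧ g.C12 = 0 ∧ g.C21 = 0 ∧ g.B1 = 0 ∧ g.B2b = 0 ∧
    g.Bt1 = star g.C11 * g.B2 ∧ g.Bh2 = -(star g.B1b * g.C22) ∧
    g.Bh1 = 0 ∧ g.Bt2 = 0 ∧ g.At = 0 ∧
    σ' = star g.C22 * σ ∧ τ' = g.C11 * τ := by
  have hsymm : (g.formDiff σ τ σ' τ').IsSymm := isSymm_of_wedgeSum_eq_zero he <| by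
    rw [← g.form_apply_sub_form hconj, hΦ, sub_self]
  obtain ⟨hC, hC12, hC21⟩ := CoframeChange.diagonal_of_isSymm_formDiff hsymm
  obtain ⟨hB1, hB2b, hσ, hτ⟩ := CoframeChange.B_and_parameters_of_isSymm_formDiff hsymm
  obtain ⟨hBt1, hBh2, hBh1, hBt2, hAt⟩ := CoframeChange.E00_coeffs_of_isSymm_formDiff hsymm
  exact ⟨hC, hC12, hC21, hB1, hB2b, hBt1, hBh2, hBh1, hBt2, hAt, hσ, hτ⟩

/-- the key computation of §5.2, formulas (5.8)–(5.10).
In the complexified dual `W*_ℂ` of an 8-dimensional real vector space, with conjugation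
`conj` and a basis `(Ω, Ω̄, E¹, Ē¹, E², Ē², E⁰₀, Ē⁰₀)`, suppose the 2-form
`Φ = −E⁰₀ ∧ Ω + Ē¹ ∧ E² + σ E¹ ∧ Ω̄ + τ Ē² ∧ Ω̄` is also expressible in the same shape in
the transformed coframe `Ω' = Ω`, `E^{i′} = Σⱼ Cⁱⱼ Eʲ + Bⁱ Ω + Bⁱ_b Ω̄`,
`E⁰₀′ = E⁰₀ + Σⱼ B̂ⱼ Eʲ + Σⱼ B̃ⱼ Ēʲ + Â Ω + Ã Ω̄` (with `(Cⁱⱼ)` invertible), say with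
coefficients `σ′, τ′`.  Then necessarily `C¹₁ C̄²₂ = 1`, `C¹₂ = C²₁ = 0`,
`B¹ = B²_b = 0`, `B̃₁ = C̄¹₁ B²`, `B̂₂ = −B̄¹_b C²₂`, `B̂₁ = B̃₂ = Ã = 0`, and moreover
`σ′ = C̄²₂ σ` and `τ′ = C¹₁ τ`. -/
theorem chern_moser_stmt_19
    (M : Type*) [AddCommGroup M] [Module ℂ M]
    (conj : M → M)
    (conj_add : ∀ x y : M, conj (x + y) = conj x + conj y)
    (conj_smul : ∀ (z : ℂ) (x : M), conj (z • x) = (starRingEnd ℂ z) • conj x)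
    (conj_conj : ∀ x : M, conj (conj x) = x)
    (Om E1 E2 E00 : M)
    (hindep : LinearIndependent ℂ
      ![Om, conj Om, E1, conj E1, E2, conj E2, E00, conj E00])
    (hspan : Submodule.span ℂ
      (Set.range ![Om, conj Om, E1, conj E1, E2, conj E2, E00, conj E00]) = ⊤)
    (σ τ : ℂ)
    (C11 C12 C21 C22 B1 B2 B1b B2b Bh1 Bh2 Bt1 Bt2 Ah At : ℂ)
    (hC : C11 * C22 - C12 * C21 ≠ 0)
    (E1' E2' E00' : M)
    (hE1' : E1' = C11 • E1 + C12 • E2 + B1 • Om + B1b • conj Om)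
    (hE2' : E2' = C21 • E1 + C22 • E2 + B2 • Om + B2b • conj Om)
    (hE00' : E00' = E00 + Bh1 • E1 + Bh2 • E2 + Bt1 • conj E1 + Bt2 • conj E2
      + Ah • Om + At • conj Om)
    (σ' τ' : ℂ)
    (hΦ :
      -(ι ℂ E00 * ι ℂ Om) + ι ℂ (conj E1) * ι ℂ E2
          + σ • (ι ℂ E1 * ι ℂ (conj Om)) + τ • (ι ℂ (conj E2) * ι ℂ (conj Om))
        = -(ι ℂ E00' * ι ℂ Om) + ι ℂ (conj E1') * ι ℂ E2'
          + σ' • (ι ℂ E1' * ι ℂ (conj Om))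
          + τ' • (ι ℂ (conj E2') * ι ℂ (conj Om))) :
    C11 * starRingEnd ℂ C22 = 1 ∧ C12 = 0 ∧ C21 = 0 ∧ B1 = 0 ∧ B2b = 0 ∧
    Bt1 = starRingEnd ℂ C11 * B2 ∧ Bh2 = -(starRingEnd ℂ B1b * C22) ∧
    Bh1 = 0 ∧ Bt2 = 0 ∧ At = 0 ∧
    σ' = starRingEnd ℂ C22 * σ ∧ τ' = C11 * τ := by
  subst hE1' hE2' hE00'
  have hhorizontal : LinearIndependent ℂ ![conj E1, conj E2, E1, E2, conj Om, Om] := by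
    convert hindep.comp ![3, 5, 2, 4, 1, 0] (by decide) using 1
    funext i
    fin_cases i <;> rfl
  exact chern_moser_stmt_19_general (conj := ⟨⟨conj, conj_add⟩, conj_smul⟩) conj_conj
    (e := ⟨Om, E1, E2, E00⟩) hhorizontal
    (g := ⟨C11, C12, C21, C22, B1, B2, B1b, B2b, Bh1, Bh2, Bt1, Bt2, Ah, At⟩) hΦ
end
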